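/- Let O(G) be a cosemisimple involutory Hopf algebra over an algebraically closed field (i.e. S² = id on O(G), hence also on any Hopf algebra quotient) and let π: O(G) → O(H) be a surjective Hopf algebra morphism that is left-normal or right-normal. Then O(H) is cosemisimple and π is normal. -/

import Mathlib

/- Common infrastructure: right comodules over coalgebras, simplicity,
cosemisimplicity, subcoalgebras, adjoint coactions, normality, etc. -/

open TensorProduct

universe u

namespace QG

variable (k : Type u) [Field k]

section Coalg

variable (C : Type u) [AddCommGroup C] [Module k C] [Coalgebra k C]

/-- `ρ : V →ₗ[k] V ⊗[k] C` is a (coassociative, counital) right coaction. -/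
structure IsComod {V : Type u} [AddCommGroup V] [Module k V]
    (ρ : V →ₗ[k] V ⊗[k] C) : Prop where
  coassoc : ∀ v : V, ρ.rTensor C (ρ v) =
    (TensorProduct.assoc k V C C).symm.toLinearMap
      ((Coalgebra.comul (R := k) (A := C)).lTensor V (ρ v))
  counit : ∀ v : V, (TensorProduct.rid k V)
      ((Coalgebra.counit (R := k) (A := C)).lTensor V (ρ v)) = v

/-- A submodule `U ≤ V` is a subcomodule if the coaction restricts to it,
i.e. maps `U` into the image of `U ⊗ C` in `V ⊗ C`. -/
def IsSubcomod {V : Type u} [AddCommGroup V] [Module k V]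
    (ρ : V →ₗ[k] V ⊗[k] C) (U : Submodule k V) : Prop :=
  ∀ u ∈ U, ρ u ∈ LinearMap.range ((U.subtype).rTensor C)

/-- A simple subcomodule: a nonzero subcomodule with no nonzero proper
subcomodules below it. -/
def IsSimpleSubcomod {V : Type u} [AddCommGroup V] [Module k V]
    (ρ : V →ₗ[k] V ⊗[k] C) (U : Submodule k V) : Prop :=
  IsSubcomod k C ρ U ∧ U ≠ ⊥ ∧
    ∀ U' : Submodule k V, U' ≤ U → IsSubcomod k C ρ U' → U' = ⊥ ∨ U' = U

/-- A comodule is simple if it is simple as a subcomodule of itself. -/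
def IsSimpleComod {V : Type u} [AddCommGroup V] [Module k V]
    (ρ : V →ₗ[k] V ⊗[k] C) : Prop :=
  IsSimpleSubcomod k C ρ ⊤

/-- Morphisms of right `C`-comodules. -/
def IsComodHom {V W : Type u} [AddCommGroup V] [Module k V]
    [AddCommGroup W] [Module k W]
    (ρV : V →ₗ[k] V ⊗[k] C) (ρW : W →ₗ[k] W ⊗[k] C) (f : V →ₗ[k] W) : Prop :=
  ρW ∘ₗ f = (f.rTensor C) ∘ₗ ρV

/-- `C` is cosemisimple: every right `C`-comodule is an (internal) direct sum
of simple subcomodules. -/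
def IsCosemisimple : Prop :=
  ∀ (V : Type u) [AddCommGroup V] [Module k V]
    (ρ : V →ₗ[k] V ⊗[k] C), IsComod k C ρ →
    ∃ (ι : Type u) (U : ι → Submodule k V),
      (∀ i, IsSimpleSubcomod k C ρ (U i)) ∧
      iSupIndep U ∧ (⨆ i, U i) = ⊤

/-- Subcoalgebras of `C`, as submodules. -/
def IsSubcoalgebra (D : Submodule k C) : Prop :=
  ∀ x ∈ D, Coalgebra.comul (R := k) x ∈
    LinearMap.range (TensorProduct.map D.subtype D.subtype)

/-- Simple subcoalgebras: nonzero ones with no nonzero proper subcoalgebras. -/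
def IsSimpleSubcoalgebra (D : Submodule k C) : Prop :=
  IsSubcoalgebra k C D ∧ D ≠ ⊥ ∧
    ∀ D' : Submodule k C, D' ≤ D → IsSubcoalgebra k C D' → D' = ⊥ ∨ D' = D

/-- The coefficient space of a comodule: the smallest submodule `D ≤ C` such
that the coaction factors through `V ⊗ D`.  For a simple comodule this is its
coefficient coalgebra. -/
def coeffSpace {V : Type u} [AddCommGroup V] [Module k V]
    (ρ : V →ₗ[k] V ⊗[k] C) : Submodule k C :=
  sInf {D : Submodule k C | ∀ v : V, ρ v ∈ LinearMap.range ((D.subtype).lTensor V)}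

/-- Corestriction of a coaction along a linear map of coalgebras `π : C → D`. -/
noncomputable def cores {D : Type u} [AddCommGroup D] [Module k D]
    {V : Type u} [AddCommGroup V] [Module k V]
    (π : C →ₗ[k] D) (ρ : V →ₗ[k] V ⊗[k] C) : V →ₗ[k] V ⊗[k] D :=
  (π.lTensor V) ∘ₗ ρ

end Coalg

section Bialg

variable (H : Type u) [Ring H] [Bialgebra k H]

/-- An invariant vector for a coaction of a bialgebra. -/
def IsInvariant {V : Type u} [AddCommGroup V] [Module k V]
    (ρ : V →ₗ[k] V ⊗[k] H) (v : V) : Prop :=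
  ρ v = v ⊗ₜ[k] (1 : H)

/-- The tensor product coaction on `V ⊗ W` for a bialgebra `H`:
`v ⊗ w ↦ (v₀ ⊗ w₀) ⊗ v₁w₁`. -/
noncomputable def tensorCoact {V W : Type u}
    [AddCommGroup V] [Module k V] [AddCommGroup W] [Module k W]
    (ρV : V →ₗ[k] V ⊗[k] H) (ρW : W →ₗ[k] W ⊗[k] H) :
    (V ⊗[k] W) →ₗ[k] (V ⊗[k] W) ⊗[k] H :=
  ((LinearMap.mul' k H).lTensor (V ⊗[k] W)) ∘ₗ
    (TensorProduct.tensorTensorTensorComm k V H W H).toLinearMap ∘ₗ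
    (TensorProduct.map ρV ρW)

/-- `O(G/H)`: the right coinvariants `{x | (id ⊗ π)Δ(x) = x ⊗ 1}` of a
quotient map `π`. -/
noncomputable def quotientSpaceLeft {B : Type u} [AddCommGroup B] [Module k B] [One B]
    (π : H →ₗ[k] B) : Submodule k H :=
  LinearMap.ker ((π.lTensor H) ∘ₗ (Coalgebra.comul (R := k) (A := H)) -
    (TensorProduct.mk k H B).flip 1)

/-- `O(H\G)`: the left coinvariants `{x | (π ⊗ id)Δ(x) = 1 ⊗ x}`. -/
noncomputable def quotientSpaceRight {B : Type u} [AddCommGroup B] [Module k B] [One B]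
    (π : H →ₗ[k] B) : Submodule k H :=
  LinearMap.ker ((π.rTensor H) ∘ₗ (Coalgebra.comul (R := k) (A := H)) -
    (TensorProduct.mk k B H) 1)

end Bialg

section Hopf

variable (H : Type u) [Ring H] [HopfAlgebra k H]

/-- Iterated comultiplication `x ↦ x₁ ⊗ (x₂ ⊗ x₃)`. -/
noncomputable def comul2 : H →ₗ[k] H ⊗[k] (H ⊗[k] H) :=
  ((Coalgebra.comul (R := k) (A := H)).lTensor H) ∘ₗ (Coalgebra.comul (R := k) (A := H))

/-- The right adjoint coaction `x ↦ x₂ ⊗ S(x₁)x₃`. -/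
noncomputable def adR : H →ₗ[k] H ⊗[k] H :=
  ((LinearMap.mul' k H).lTensor H) ∘ₗ
    (TensorProduct.assoc k H H H).toLinearMap ∘ₗ
    (((TensorProduct.comm k H H).toLinearMap).rTensor H) ∘ₗ
    (TensorProduct.assoc k H H H).symm.toLinearMap ∘ₗ
    ((HopfAlgebra.antipode (R := k) (A := H)).rTensor (H ⊗[k] H)) ∘ₗ
    comul2 k H

/-- The left adjoint coaction `x ↦ x₁S(x₃) ⊗ x₂` (a left coaction, with the
coacting tensorand on the left). -/
noncomputable def adL : H →ₗ[k] H ⊗[k] H :=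
  ((LinearMap.mul' k H).rTensor H) ∘ₗ
    (TensorProduct.assoc k H H H).symm.toLinearMap ∘ₗ
    (((TensorProduct.comm k H H).toLinearMap).lTensor H) ∘ₗ
    (((HopfAlgebra.antipode (R := k) (A := H)).lTensor H).lTensor H) ∘ₗ
    comul2 k H

variable {B : Type u} [AddCommGroup B] [Module k B]

/-- `π : O(G) → O(H)` is right-normal: it is a morphism of right
`O(G)`-comodules for the right adjoint coaction, i.e. the right adjoint
coaction descends along `π`. -/
def IsRightNormal (π : H →ₗ[k] B) : Prop :=
  ∃ ρ : B →ₗ[k] B ⊗[k] H, ρ ∘ₗ π = (π.rTensor H) ∘ₗ adR k H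

/-- `π : O(G) → O(H)` is left-normal: the left adjoint coaction descends
along `π`. -/
def IsLeftNormal (π : H →ₗ[k] B) : Prop :=
  ∃ lam : B →ₗ[k] H ⊗[k] B, lam ∘ₗ π = (π.lTensor H) ∘ₗ adL k H

end Hopf

end QG

namespace QG

variable (k : Type u) [Field k]

section Coalg2

variable (C : Type u) [AddCommGroup C] [Module k C] [Coalgebra k C]

/-- A bundled simple right `C`-comodule. -/
structure SimpleComodule where
  V : Type u
  [addCommGroup : AddCommGroup V]
  [module : Module k V]
  ρ : V →ₗ[k] V ⊗[k] C
  isComod : IsComod k C ρ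
  isSimple : IsSimpleComod k C ρ

attribute [instance] SimpleComodule.addCommGroup SimpleComodule.module

/-- A simple comodule `(T, ρT)` is a constituent of a comodule `(V, ρV)`
(over a cosemisimple coalgebra) iff there is a nonzero comodule map `T → V`. -/
def IsConstituent {T V : Type u} [AddCommGroup T] [Module k T]
    [AddCommGroup V] [Module k V]
    (ρT : T →ₗ[k] T ⊗[k] C) (ρV : V →ₗ[k] V ⊗[k] C) : Prop :=
  ∃ f : T →ₗ[k] V, f ≠ 0 ∧ IsComodHom k C ρT ρV f

/-- Isomorphism of (simple) comodules. -/
def comodIsoRel (X Y : SimpleComodule k C) : Prop :=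
  ∃ e : X.V ≃ₗ[k] Y.V, IsComodHom k C X.ρ Y.ρ e.toLinearMap

/-- The set `Ĉ` of isomorphism classes of simple right `C`-comodules. -/
def SimpleComodQuot := Quot (comodIsoRel k C)

/-- The isomorphism class of a simple comodule. -/
def SimpleComodule.cls (X : SimpleComodule k C) : SimpleComodQuot k C :=
  Quot.mk _ X

/-- Group-like elements of a coalgebra; these correspond to the
one-dimensional comodules, i.e. to characters. -/
def IsGroupLike (a : C) : Prop :=
  Coalgebra.counit (R := k) (A := C) a = (1 : k) ∧
    Coalgebra.comul (R := k) (A := C) a = a ⊗ₜ[k] a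

/-- A linear map `φ : C → Z` out of a coalgebra is central if
`φ(x₁) ⊗ x₂ = φ(x₂) ⊗ x₁`. -/
def IsCentralMap {Z : Type u} [AddCommGroup Z] [Module k Z] (φ : C →ₗ[k] Z) : Prop :=
  (φ.rTensor C) ∘ₗ (Coalgebra.comul (R := k) (A := C)) =
    (φ.rTensor C) ∘ₗ (TensorProduct.comm k C C).toLinearMap ∘ₗ
      (Coalgebra.comul (R := k) (A := C))

/-- The simple comodule `X` has "central character" `g` with respect to the
quotient map `γ : C → Z`: corestricted along `γ`, the coaction on `X` is a sum
of copies of the character `g`. -/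
def HasCentralChar {Z : Type u} [AddCommGroup Z] [Module k Z]
    (γ : C →ₗ[k] Z) (X : SimpleComodule k C) (g : Z) : Prop :=
  ∀ v : X.V, cores k C γ X.ρ v = v ⊗ₜ[k] g

end Coalg2

/-- The k-span of the set of products `g * a`, `a ∈ Am`; for `Am` a submodule
this is the left ideal generated by `Am`. -/
def leftIdealGen {G : Type u} [Ring G] [Module k G] (Am : Submodule k G) :
    Submodule k G :=
  Submodule.span k {x : G | ∃ g : G, ∃ a ∈ Am, x = g * a}

end QG

/-!
Let `c` be the coefficient matrix of a finite-dimensional `O(G)`-comodule `V`, let `T` be the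
algebra of slices `f(π(cᵢⱼ))`, through which `O(H)^*` acts on `V`, and let `Z` be the commutant of
`T`. When `S² = 1`, the antipode exchanges the two adjoint coactions, so one-sided normality implies
normality; left normality then says that `T` is stable under the coaction `t ↦ c t S(c)` of `O(G)`
on matrices, and right normality that `Z` is.

The condition `S² = 1` also makes this coaction self-adjoint for `tr(xy)`. Since `T` has an
invariant complement, every functional on `T` vanishing on commutators has the form `t ↦ tr(zt)`
with `z ∈ Z`. By Wedderburn's theorem the radical `J` of `T` is cut out by such functionals, so it
is the part of `T` orthogonal to `ZT`, and it is invariant. Hence `JV` is an `O(G)`-subcomodule of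
`V`. As `O(G)` is cosemisimple, `JV` has a complement, and Nakayama's lemma gives `JV = 0`, that
is `J = 0`. So every `O(H)`-comodule of the form `V` is semisimple, and the coefficients of these
span `O(H)`.
-/

namespace QG

open Matrix HopfAlgebra

/-! ### Comodules as modules over the dual algebra -/

section Slice

variable {k : Type*} [CommRing k] {C : Type*} [AddCommGroup C] [Module k C]
  {V W : Type*} [AddCommGroup V] [Module k V] [AddCommGroup W] [Module k W]

/-- The slice map `v ⊗ c ↦ f(c) v` attached to a functional `f`; it lets a coaction be studied
through the operators it induces on the coacted space. -/
noncomputable def slice (f : C →ₗ[k] k) : V ⊗[k] C →ₗ[k] V :=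
  (TensorProduct.rid k V).toLinearMap ∘ₗ f.lTensor V

@[simp]
theorem slice_tmul (f : C →ₗ[k] k) (v : V) (c : C) : slice f (v ⊗ₜ[k] c) = f c • v := by
  simp [slice]

theorem slice_rTensor (f : C →ₗ[k] k) (φ : V →ₗ[k] W) (x : V ⊗[k] C) :
    slice f (φ.rTensor C x) = φ (slice f x) := by
  induction x with
  | zero => simp only [map_zero]
  | tmul v c => simp only [LinearMap.rTensor_tmul, slice_tmul, map_smul]
  | add x y hx hy => simp only [map_add, hx, hy]

theorem exists_eq_sum_slice_tmul {ι : Type*} (b : Module.Basis ι k C) (x : V ⊗[k] C) :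
    ∃ s : Finset ι, x = ∑ i ∈ s, slice (b.coord i) x ⊗ₜ[k] b i := by
  classical
  obtain ⟨v, rfl⟩ := TensorProduct.eq_repr_basis_right b x
  have hslice (i : ι) : slice (b.coord i) (v.sum fun j w ↦ w ⊗ₜ[k] b j) = v i := by
    simp [Finsupp.sum, Finsupp.single_apply, eq_comm]
  exact ⟨v.support, by simp only [hslice]; rfl⟩

theorem mem_range_rTensor_subtype_iff [Module.Free k C] {U : Submodule k V} {x : V ⊗[k] C} :
    x ∈ LinearMap.range (U.subtype.rTensor C) ↔ ∀ f : C →ₗ[k] k, slice f x ∈ U := by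
  constructor
  · rintro ⟨y, rfl⟩ f
    rw [slice_rTensor]
    exact (slice f y).2
  · intro h
    obtain ⟨s, hs⟩ := exists_eq_sum_slice_tmul (Module.Free.chooseBasis k C) x
    rw [hs]
    exact Submodule.sum_mem _ fun i _ ↦ ⟨⟨_, h _⟩ ⊗ₜ[k] _, LinearMap.rTensor_tmul ..⟩

end Slice

section Comodule

/-- The convolution algebra `C*` dual to a coalgebra, with `(f * g)(c) = f(c₁) g(c₂)`; right
`C`-comodules are left `C*`-modules. -/
abbrev DualAlgebra (k C : Type*) [CommRing k] [AddCommGroup C] [Module k C] : Type _ :=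
  WithConv (C →ₗ[k] k)

variable {k : Type u} [Field k] {C : Type u} [AddCommGroup C] [Module k C]
  {V : Type u} [AddCommGroup V] [Module k V] {ρ : V →ₗ[k] V ⊗[k] C}

theorem isSubcomod_iff {U : Submodule k V} :
    IsSubcomod k C ρ U ↔ ∀ f : C →ₗ[k] k, ∀ u ∈ U, slice f (ρ u) ∈ U := by
  simp only [IsSubcomod, mem_range_rTensor_subtype_iff]
  exact ⟨fun h f u hu ↦ h u hu f, fun h u hu f ↦ h f u hu⟩

variable [Coalgebra k C]

theorem slice_slice_assoc_symm_lTensor_comul (f g : DualAlgebra k C) (x : V ⊗[k] C) :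
    slice f.ofConv (slice g.ofConv ((TensorProduct.assoc k V C C).symm
      ((Coalgebra.comul (R := k) (A := C)).lTensor V x))) = slice (f * g).ofConv x := by
  induction x with
  | zero => simp only [map_zero]
  | add x y hx hy => simp only [map_add, hx, hy]
  | tmul v c =>
    rw [LinearMap.lTensor_tmul, slice_tmul, LinearMap.convMul_apply]
    induction Coalgebra.comul (R := k) c with
    | zero => simp
    | add y z hy hz => simp only [TensorProduct.tmul_add, map_add, hy, hz, add_smul]
    | tmul c d => simp [smul_smul, mul_comm]

/-- The operators `v ↦ v₀ f(v₁)` of a comodule, as a representation of the dual algebra. -/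
noncomputable def IsComod.dualAlgHom (hρ : IsComod k C ρ) :
    DualAlgebra k C →ₐ[k] Module.End k V :=
  AlgHom.ofLinearMap
    { toFun f := slice f.ofConv ∘ₗ ρ
      map_add' f g := by
        ext v
        simp [slice, LinearMap.lTensor_add]
      map_smul' a f := by
        ext v
        simp [slice, LinearMap.lTensor_smul] }
    (by
      ext v
      exact hρ.counit v)
    (by
      intro f g
      ext v
      have hcoassoc := congrArg (fun x ↦ slice f.ofConv (slice g.ofConv x)) (hρ.coassoc v)
      simp only [slice_rTensor, LinearEquiv.coe_coe,
        slice_slice_assoc_symm_lTensor_comul] at hcoassoc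
      exact hcoassoc.symm)

/-- A right comodule as a left module over the dual algebra. -/
@[reducible]
noncomputable def IsComod.module (hρ : IsComod k C ρ) : Module (DualAlgebra k C) V :=
  Module.compHom V hρ.dualAlgHom.toRingHom

theorem IsComod.smul_def (hρ : IsComod k C ρ) (f : DualAlgebra k C) (v : V) :
    letI := hρ.module
    f • v = slice f.ofConv (ρ v) := rfl

theorem IsComod.isScalarTower (hρ : IsComod k C ρ) :
    letI := hρ.module
    IsScalarTower k (DualAlgebra k C) V :=
  letI := hρ.module
  ⟨fun a f v ↦ LinearMap.congr_fun (hρ.dualAlgHom.toLinearMap.map_smul a f) v⟩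

end Comodule

section Semisimple

variable {R : Type*} [Ring R] {M N : Type*} [AddCommGroup M] [Module R M] [AddCommGroup N]
  [Module R N]

theorem isSemisimpleModule_span_singleton_of_annihilator_le [IsSemisimpleModule R M] (x : M)
    (y : N) (h : ∀ r : R, r • x = 0 → r • y = 0) :
    IsSemisimpleModule R (Submodule.span R {y}) := by
  let φ := LinearMap.toSpanSingleton R M x
  let ψ := LinearMap.toSpanSingleton R N y
  have : IsSemisimpleModule R (R ⧸ LinearMap.ker φ) := .congr φ.quotKerEquivRange
  have hker : LinearMap.ker φ ≤ LinearMap.ker ψ := h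
  have hrange : LinearMap.range ((LinearMap.ker φ).liftQ ψ hker) = Submodule.span R {y} := by
    rw [Submodule.range_liftQ, LinearMap.range_toSpanSingleton]
  rw [← hrange]
  exact .range _

theorem isSemisimpleModule_span_singleton_of_ker_le {A : Type*} [Ring A] [IsSemisimpleRing A]
    {φ : R →+* A} (hφ : Function.Surjective φ) (y : N) (h : ∀ r : R, φ r = 0 → r • y = 0) :
    IsSemisimpleModule R (Submodule.span R {y}) := by
  let : Module R A := Module.compHom A φ
  have : RingHomSurjective φ := ⟨hφ⟩
  have : IsSemisimpleModule R A :=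
    (LinearMap.isSemisimpleModule_iff_of_bijective
      (⟨AddMonoidHom.id A, fun _ _ ↦ rfl⟩ : A →ₛₗ[φ] A) Function.bijective_id).mpr inferInstance
  exact isSemisimpleModule_span_singleton_of_annihilator_le (1 : A) y fun r hr ↦
    h r ((mul_one (φ r)).symm.trans hr)

theorem isSemisimpleModule_of_span_singleton {s : Set N} (hs : Submodule.span R s = ⊤)
    (h : ∀ y ∈ s, IsSemisimpleModule R (Submodule.span R {y})) : IsSemisimpleModule R N :=
  isSemisimpleModule_of_isSemisimpleModule_submodule (s := s) (p := fun y ↦ Submodule.span R {y})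
    h (by rw [← Submodule.span_eq_iSup_of_singleton_spans, hs])

end Semisimple

section Comodule

variable {k : Type u} [Field k] {C : Type u} [AddCommGroup C] [Module k C] [Coalgebra k C]
  {V : Type u} [AddCommGroup V] [Module k V] {ρ : V →ₗ[k] V ⊗[k] C}

theorem IsComod.isSubcomod_restrictScalars (hρ : IsComod k C ρ) :
    letI := hρ.module
    letI := hρ.isScalarTower
    ∀ N : Submodule (DualAlgebra k C) V, IsSubcomod k C ρ (N.restrictScalars k) :=
  letI := hρ.module
  letI := hρ.isScalarTower
  fun N ↦ isSubcomod_iff.mpr fun f _ hu ↦ N.smul_mem (WithConv.toConv f) hu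

theorem IsComod.exists_restrictScalars_eq (hρ : IsComod k C ρ) {U : Submodule k V}
    (hU : IsSubcomod k C ρ U) :
    letI := hρ.module
    letI := hρ.isScalarTower
    ∃ N : Submodule (DualAlgebra k C) V, N.restrictScalars k = U :=
  letI := hρ.module
  letI := hρ.isScalarTower
  ⟨{ U with smul_mem' := fun f _ hu ↦ isSubcomod_iff.mp hU f.ofConv _ hu }, rfl⟩

theorem IsComod.isSimpleSubcomod_restrictScalars_iff (hρ : IsComod k C ρ) :
    letI := hρ.module
    letI := hρ.isScalarTower
    ∀ N : Submodule (DualAlgebra k C) V,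
      IsSimpleSubcomod k C ρ (N.restrictScalars k) ↔ IsSimpleModule (DualAlgebra k C) N := by
  let := hρ.module
  let := hρ.isScalarTower
  intro N
  rw [isSimpleModule_iff_isAtom, isAtom_iff_le_of_ge]
  constructor
  · rintro ⟨-, hne, hmin⟩
    refine ⟨fun h ↦ hne ?_, fun P hP hPN ↦ ?_⟩
    · rw [h, Submodule.restrictScalars_bot]
    · refine ((hmin (P.restrictScalars k) hPN (hρ.isSubcomod_restrictScalars P)).resolve_left
        fun h ↦ hP ?_).ge
      rwa [Submodule.restrictScalars_eq_bot_iff] at h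
  · rintro ⟨hne, hmin⟩
    refine ⟨hρ.isSubcomod_restrictScalars N, ?_, fun U hUN hU ↦ ?_⟩
    · rwa [Ne, Submodule.restrictScalars_eq_bot_iff]
    · obtain ⟨P, rfl⟩ := hρ.exists_restrictScalars_eq hU
      rw [Submodule.restrictScalars_eq_bot_iff]
      exact or_iff_not_imp_left.mpr fun h ↦ hUN.antisymm (hmin P h hUN)

theorem IsComod.isSemisimpleModule_iff (hρ : IsComod k C ρ) :
    letI := hρ.module
    IsSemisimpleModule (DualAlgebra k C) V ↔
      ∃ (ι : Type u) (U : ι → Submodule k V),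
        (∀ i, IsSimpleSubcomod k C ρ (U i)) ∧ iSupIndep U ∧ ⨆ i, U i = ⊤ := by
  let := hρ.module
  let := hρ.isScalarTower
  constructor
  · intro
    obtain ⟨s, hindep, hsup, hsimple⟩ :=
      IsSemisimpleModule.exists_sSupIndep_sSup_simples_eq_top (DualAlgebra k C) V
    refine ⟨s, fun N ↦ N.1.restrictScalars k,
      fun N ↦ (hρ.isSimpleSubcomod_restrictScalars_iff N).mpr (hsimple N N.2), fun N ↦ ?_, ?_⟩
    · simp only [← Submodule.restrictScalars_iSup, Submodule.disjoint_restrictScalars_iff]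
      exact (sSupIndep_iff s).mp hindep N
    · rw [← Submodule.restrictScalars_iSup, ← sSup_eq_iSup', hsup, Submodule.restrictScalars_top]
  · rintro ⟨ι, U, hU, -, hsup⟩
    choose N hN using fun i ↦ hρ.exists_restrictScalars_eq (hU i).1
    have hsimple (i : ι) : IsSimpleModule (DualAlgebra k C) (N i) :=
      (hρ.isSimpleSubcomod_restrictScalars_iff (N i)).mp (hN i ▸ hU i)
    refine isSemisimpleModule_of_isSemisimpleModule_submodule' (p := N) (fun i ↦ inferInstance) ?_
    rw [← Submodule.restrictScalars_eq_top_iff k, Submodule.restrictScalars_iSup]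
    simpa only [hN] using hsup

theorem isComod_comul : IsComod k C (Coalgebra.comul (R := k) (A := C)) where
  coassoc v := (Coalgebra.coassoc_symm_apply v).symm
  counit v := by simp

/-- The regular right comodule `C`, as a module over the dual algebra: `f • c = c₁ f(c₂)`. -/
noncomputable instance dualAlgebraModule : Module (DualAlgebra k C) C := isComod_comul.module

theorem counit_slice_comul (f : C →ₗ[k] k) (c : C) :
    Coalgebra.counit (R := k) (slice f (Coalgebra.comul (R := k) c)) = f c := by
  rw [← slice_rTensor, Coalgebra.rTensor_counit_comul, slice_tmul, smul_eq_mul, mul_one]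

/-- The annihilator of a vector contains that of finitely many elements of the regular comodule,
namely of its coefficients. -/
theorem IsComod.isSemisimpleModule [IsSemisimpleModule (DualAlgebra k C) C]
    (hρ : IsComod k C ρ) :
    letI := hρ.module
    IsSemisimpleModule (DualAlgebra k C) V := by
  let := hρ.module
  refine isSemisimpleModule_of_span_singleton Submodule.span_univ fun v _ ↦ ?_
  let b := Module.Free.chooseBasis k C
  obtain ⟨s, hs⟩ := exists_eq_sum_slice_tmul b (ρ v)
  refine isSemisimpleModule_span_singleton_of_annihilator_le (fun i : s ↦ b i) v fun f hf ↦ ?_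
  have hcoeff (i : s) : f.ofConv (b i) = 0 := by
    rw [← counit_slice_comul f.ofConv (b i)]
    exact (congrArg _ (congrFun hf i)).trans (map_zero _)
  rw [hρ.smul_def, hs, map_sum]
  refine Finset.sum_eq_zero fun i hi ↦ ?_
  rw [slice_tmul, hcoeff ⟨i, hi⟩, zero_smul]

theorem isCosemisimple_iff :
    IsCosemisimple k C ↔ IsSemisimpleModule (DualAlgebra k C) C :=
  ⟨fun h ↦ isComod_comul.isSemisimpleModule_iff.mpr (h C _ isComod_comul),
    fun _ _ _ _ _ hρ ↦ hρ.isSemisimpleModule_iff.mp hρ.isSemisimpleModule⟩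

end Comodule

/-! ### Multiplicative matrices -/

section MultiplicativeMatrix

/-- A square matrix `c` over a coalgebra is multiplicative if `Δ(cᵢⱼ) = ∑ₗ cᵢₗ ⊗ cₗⱼ` and
`ε(cᵢⱼ) = δᵢⱼ`. These are the matrices of coefficients of finite-dimensional comodules; all
computations with a comodule are done on its matrix. -/
structure IsMultiplicative (k : Type*) [CommRing k] {C : Type*} [AddCommGroup C] [Module k C]
    [Coalgebra k C] {n : Type*} [Fintype n] [DecidableEq n] (c : Matrix n n C) : Prop where
  comul : ∀ i j, Coalgebra.comul (R := k) (c i j) = ∑ l, c i l ⊗ₜ[k] c l j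
  counit : ∀ i j, Coalgebra.counit (R := k) (c i j) = (1 : Matrix n n k) i j

theorem IsMultiplicative.map {k : Type*} [CommRing k] {C D : Type*} [AddCommGroup C] [Module k C]
    [Coalgebra k C] [AddCommGroup D] [Module k D] [Coalgebra k D] {n : Type*} [Fintype n]
    [DecidableEq n] {c : Matrix n n C} (hc : IsMultiplicative k c) {F : Type*} [FunLike F C D]
    [CoalgHomClass F k C D] (π : F) : IsMultiplicative k (c.map π) where
  comul i j := by
    simp only [Matrix.map_apply, ← CoalgHomClass.map_comp_comul_apply π (c i j), hc.comul,
      map_sum, TensorProduct.map_tmul]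
    rfl
  counit i j := (CoalgHomClass.counit_comp_apply π (c i j)).trans (hc.counit i j)

/-- The representation `f ↦ (f(cᵢⱼ))` of the dual algebra attached to a multiplicative matrix. -/
noncomputable def IsMultiplicative.dualAlgHom {k : Type*} [CommRing k] {C : Type*}
    [AddCommGroup C] [Module k C] [Coalgebra k C] {n : Type*} [Fintype n] [DecidableEq n]
    {c : Matrix n n C} (hc : IsMultiplicative k c) : DualAlgebra k C →ₐ[k] Matrix n n k :=
  AlgHom.ofLinearMap
    { toFun f := c.map f.ofConv
      map_add' _ _ := rfl
      map_smul' _ _ := rfl }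
    (by
      ext i j
      exact hc.counit i j)
    (by
      intro f g
      ext i j
      change (f * g).ofConv (c i j) = (c.map f.ofConv * c.map g.ofConv) i j
      rw [LinearMap.convMul_apply, hc.comul]
      simp [Matrix.mul_apply])

variable {k : Type u} [Field k] {C : Type u} [AddCommGroup C] [Module k C]

/-- A subspace of `kⁿ` invariant under all the matrices `(f(cᵢⱼ))`; for multiplicative `c` these
are the subcomodules of the comodule with coefficient matrix `c`. -/
def IsSliceInvariant {n : Type*} [Fintype n] (c : Matrix n n C) (U : Submodule k (n → k)) :
    Prop :=
  ∀ f : C →ₗ[k] k, ∀ u ∈ U, c.map f *ᵥ u ∈ U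

/-- The coaction `eⱼ ↦ ∑ᵢ eᵢ ⊗ cᵢⱼ` on `kⁿ`. -/
noncomputable def matrixCoaction (k : Type*) [CommRing k] {C : Type*} [AddCommGroup C]
    [Module k C] {n : Type*} [Fintype n] [DecidableEq n] (c : Matrix n n C) :
    (n → k) →ₗ[k] (n → k) ⊗[k] C :=
  (Pi.basisFun k n).constr k fun j ↦ ∑ i, Pi.basisFun k n i ⊗ₜ[k] c i j

variable {n : Type} [Fintype n] [DecidableEq n] {c : Matrix n n C}

theorem slice_matrixCoaction (c : Matrix n n C) (f : C →ₗ[k] k) (v : n → k) :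
    slice f (matrixCoaction k c v) = c.map f *ᵥ v := by
  suffices slice f ∘ₗ matrixCoaction k c = (c.map f).mulVecLin from LinearMap.congr_fun this v
  refine (Pi.basisFun k n).ext fun j ↦ ?_
  ext i
  rw [LinearMap.comp_apply, matrixCoaction, Module.Basis.constr_basis]
  simp [Pi.single_apply]

theorem isSubcomod_matrixCoaction_iff {U : Submodule k (n → k)} :
    IsSubcomod k C (matrixCoaction k c) U ↔ IsSliceInvariant c U := by
  simp only [isSubcomod_iff, slice_matrixCoaction, IsSliceInvariant]

variable [Coalgebra k C]

theorem IsMultiplicative.isComod (hc : IsMultiplicative k c) :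
    IsComod k C (matrixCoaction k c) := by
  have hbasis (j : n) : matrixCoaction k c (Pi.basisFun k n j) =
      ∑ i, Pi.basisFun k n i ⊗ₜ[k] c i j := Module.Basis.constr_basis ..
  constructor
  · suffices (matrixCoaction k c).rTensor C ∘ₗ matrixCoaction k c =
        (TensorProduct.assoc k _ C C).symm.toLinearMap ∘ₗ
          Coalgebra.comul.lTensor (n → k) ∘ₗ matrixCoaction k c from LinearMap.congr_fun this
    refine (Pi.basisFun k n).ext fun j ↦ ?_
    simp only [LinearMap.comp_apply, hbasis, map_sum, LinearMap.rTensor_tmul,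
      LinearMap.lTensor_tmul, hc.comul, TensorProduct.sum_tmul, TensorProduct.tmul_sum,
      LinearEquiv.coe_coe, TensorProduct.assoc_symm_tmul]
    exact Finset.sum_comm
  · intro v
    refine (slice_matrixCoaction c _ v).trans ?_
    rw [show c.map Coalgebra.counit = (1 : Matrix n n k) from Matrix.ext hc.counit, one_mulVec]

theorem IsMultiplicative.exists_isCompl_isSliceInvariant (hC : IsCosemisimple k C)
    (hc : IsMultiplicative k c) {U : Submodule k (n → k)} (hU : IsSliceInvariant c U) :
    ∃ W : Submodule k (n → k), IsSliceInvariant c W ∧ IsCompl U W := by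
  let := hc.isComod.module
  let := hc.isComod.isScalarTower
  have : IsSemisimpleModule (DualAlgebra k C) (n → k) :=
    hc.isComod.isSemisimpleModule_iff.mpr (hC _ _ hc.isComod)
  obtain ⟨N, rfl⟩ :=
    hc.isComod.exists_restrictScalars_eq (isSubcomod_matrixCoaction_iff.mpr hU)
  obtain ⟨P, hP⟩ := exists_isCompl N
  exact ⟨P.restrictScalars k,
    isSubcomod_matrixCoaction_iff.mp (hc.isComod.isSubcomod_restrictScalars P),
    (Submodule.isCompl_restrictScalars_iff k).mpr hP⟩

end MultiplicativeMatrix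

section FundamentalTheorem

variable {k : Type u} [Field k] {C : Type u} [AddCommGroup C] [Module k C]
  {V : Type u} [AddCommGroup V] [Module k V] {ρ : V →ₗ[k] V ⊗[k] C}

theorem eq_of_forall_dual_eq {k : Type*} [Field k] {V : Type*} [AddCommGroup V] [Module k V]
    {x y : V} (h : ∀ f : V →ₗ[k] k, f x = f y) : x = y := by
  refine sub_eq_zero.mp ((Module.forall_dual_apply_eq_zero_iff k _).mp fun f ↦ ?_)
  rw [map_sub, h, sub_self]

theorem eq_of_sum_tmul_eq {n : Type*} [Fintype n] {D : Type*} [AddCommGroup D] [Module k D]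
    {e : n → V} (he : LinearIndependent k e) {x y : n → D}
    (h : ∑ i, e i ⊗ₜ[k] x i = ∑ i, e i ⊗ₜ[k] y i) : x = y := by
  funext i
  refine eq_of_forall_dual_eq (k := k) fun f ↦ ?_
  have hf := congrArg (slice f) h
  simp only [map_sum, slice_tmul] at hf
  exact congrFun (he.fintypeLinearCombination_injective hf) i

variable [Coalgebra k C]

theorem IsComod.exists_isMultiplicative (hρ : IsComod k C ρ) {U : Submodule k V}
    (hU : IsSubcomod k C ρ U) {n : Type*} [Fintype n] [DecidableEq n] (e : Module.Basis n k U) :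
    ∃ c : Matrix n n C, IsMultiplicative k c ∧ ∀ j, ρ (e j) = ∑ i, (e i : V) ⊗ₜ[k] c i j := by
  have hexists (j : n) : ∃ c : n → C, ρ (e j) = ∑ i, (e i : V) ⊗ₜ[k] c i := by
    obtain ⟨y, hy⟩ := hU (e j) (e j).2
    obtain ⟨c, rfl⟩ := TensorProduct.eq_repr_basis_left e y
    rw [Finsupp.sum_fintype _ _ fun _ ↦ TensorProduct.tmul_zero _ _] at hy
    exact ⟨c, by simpa using hy.symm⟩
  choose c hc using hexists
  have he : LinearIndependent k fun i ↦ (e i : V) :=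
    e.linearIndependent.map' U.subtype U.ker_subtype
  refine ⟨fun i j ↦ c j i, ⟨fun i j ↦ ?_, fun i j ↦ ?_⟩, hc⟩
  · have hcoassoc := congrArg (TensorProduct.assoc k V C C) (hρ.coassoc (e j))
    simp only [LinearEquiv.coe_coe, LinearEquiv.apply_symm_apply, hc, map_sum,
      LinearMap.rTensor_tmul, LinearMap.lTensor_tmul, TensorProduct.sum_tmul,
      TensorProduct.assoc_tmul] at hcoassoc
    rw [Finset.sum_comm] at hcoassoc
    simp only [← TensorProduct.tmul_sum] at hcoassoc
    exact (congrFun (eq_of_sum_tmul_eq he hcoassoc) i).symm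
  · have hcounit : ∑ i, Coalgebra.counit (R := k) (c j i) • (e i : V) =
        ∑ i, (1 : Matrix n n k) i j • (e i : V) := by
      have h := hρ.counit (e j)
      simp only [hc, map_sum, LinearMap.lTensor_tmul, TensorProduct.rid_tmul] at h
      simpa [Matrix.one_apply] using h
    exact congrFun (he.fintypeLinearCombination_injective hcounit) i

theorem IsComod.exists_finite_isSubcomod (hρ : IsComod k C ρ) (v : V) :
    ∃ U : Submodule k V, IsSubcomod k C ρ U ∧ v ∈ U ∧ Module.Finite k U := by
  let := hρ.module
  let := hρ.isScalarTower
  refine ⟨(Submodule.span (DualAlgebra k C) {v}).restrictScalars k,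
    hρ.isSubcomod_restrictScalars _, Submodule.mem_span_singleton_self v, ?_⟩
  obtain ⟨s, hs⟩ := TensorProduct.exists_finset (ρ v)
  classical
  refine Submodule.finiteDimensional_of_le
    (S₂ := Submodule.span k ((s.image Prod.fst : Finset V) : Set V)) fun u hu ↦ ?_
  obtain ⟨f, rfl⟩ := Submodule.mem_span_singleton.mp hu
  rw [hρ.smul_def, hs, map_sum]
  refine Submodule.sum_mem _ fun p hp ↦ ?_
  rw [slice_tmul]
  exact Submodule.smul_mem _ _ (Submodule.subset_span (Finset.mem_image_of_mem _ hp))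

theorem exists_isMultiplicative_mem_span (x : C) :
    ∃ (n : ℕ) (c : Matrix (Fin n) (Fin n) C), IsMultiplicative k c ∧
      x ∈ Submodule.span k (Set.range fun p : Fin n × Fin n ↦ c p.1 p.2) := by
  obtain ⟨U, hU, hx, _⟩ := isComod_comul.exists_finite_isSubcomod (k := k) x
  let e := Module.finBasis k U
  obtain ⟨c, hc, he⟩ := isComod_comul.exists_isMultiplicative hU e
  refine ⟨_, c, hc, ?_⟩
  have hmem (j) : (e j : C) ∈ Submodule.span k (Set.range fun p : _ × _ ↦ c p.1 p.2) := by
    have hcounit := congrArg (TensorProduct.lid k C)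
      (Coalgebra.rTensor_counit_comul (R := k) (e j : C))
    simp only [he, map_sum, LinearMap.rTensor_tmul, TensorProduct.lid_tmul, one_smul] at hcounit
    rw [← hcounit]
    exact Submodule.sum_mem _ fun i _ ↦
      Submodule.smul_mem _ _ (Submodule.subset_span ⟨(i, j), rfl⟩)
  have hrepr : ∑ j, e.repr ⟨x, hx⟩ j • (e j : C) = x :=
    (map_sum U.subtype _ _).symm.trans (congrArg U.subtype (e.sum_repr ⟨x, hx⟩))
  rw [← hrepr]
  exact Submodule.sum_mem _ fun j _ ↦ Submodule.smul_mem _ _ (hmem j)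

theorem linearMap_ext_of_isMultiplicative {W : Type*} [AddCommGroup W] [Module k W]
    {f g : C →ₗ[k] W}
    (h : ∀ (n : ℕ) (c : Matrix (Fin n) (Fin n) C), IsMultiplicative k c →
      ∀ i j, f (c i j) = g (c i j)) : f = g := by
  ext x
  obtain ⟨n, c, hc, hx⟩ := exists_isMultiplicative_mem_span (k := k) x
  refine LinearMap.eqOn_span ?_ hx
  rintro _ ⟨p, rfl⟩
  exact h n c hc p.1 p.2

end FundamentalTheorem

/-! ### Antipodes and adjoint coactions -/

section Antipode

variable {k : Type*} [CommRing k] {A : Type*} [Ring A] [HopfAlgebra k A]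
  {n : Type*} [Fintype n] [DecidableEq n] {c : Matrix n n A}

namespace IsMultiplicative

theorem mul_map_antipode (hc : IsMultiplicative k c) : c * c.map (antipode k) = 1 := by
  ext i j
  have h := mul_antipode_lTensor_comul_apply (R := k) (c i j)
  rw [hc.comul, hc.counit] at h
  simp only [map_sum, LinearMap.lTensor_tmul, LinearMap.mul'_apply] at h
  rw [Matrix.mul_apply]
  simp only [Matrix.map_apply, h, Matrix.one_apply]
  split_ifs <;> simp

theorem map_antipode_mul (hc : IsMultiplicative k c) : c.map (antipode k) * c = 1 := by
  ext i j
  have h := mul_antipode_rTensor_comul_apply (R := k) (c i j)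
  rw [hc.comul, hc.counit] at h
  simp only [map_sum, LinearMap.rTensor_tmul, LinearMap.mul'_apply] at h
  rw [Matrix.mul_apply]
  simp only [Matrix.map_apply, h, Matrix.one_apply]
  split_ifs <;> simp

theorem map_mul_map_map_antipode {B : Type*} [Semiring B] [Algebra k B]
    (hc : IsMultiplicative k c) (φ : A →ₐ[k] B) :
    c.map φ * (c.map (antipode k)).map φ = 1 := by
  rw [← Matrix.map_mul, hc.mul_map_antipode, Matrix.map_one _ (map_zero φ) (map_one φ)]

theorem map_map_antipode_mul_map {B : Type*} [Semiring B] [Algebra k B]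
    (hc : IsMultiplicative k c) (φ : A →ₐ[k] B) :
    (c.map (antipode k)).map φ * c.map φ = 1 := by
  rw [← Matrix.map_mul, hc.map_antipode_mul, Matrix.map_one _ (map_zero φ) (map_one φ)]

theorem comul_antipode (hc : IsMultiplicative k c) (i j : n) :
    Coalgebra.comul (R := k) (antipode k (c i j)) =
      ∑ l, antipode k (c l j) ⊗ₜ[k] antipode k (c i l) := by
  let Δ : A →ₐ[k] A ⊗[k] A := Bialgebra.comulAlgHom k A
  let ι₁ : A →ₐ[k] A ⊗[k] A := Algebra.TensorProduct.includeLeft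
  let ι₂ : A →ₐ[k] A ⊗[k] A := Algebra.TensorProduct.includeRight
  have hΔ : c.map Δ = c.map ι₁ * c.map ι₂ := by
    ext i j
    refine (hc.comul i j).trans ?_
    simp [Matrix.mul_apply, ι₁, ι₂]
  have hinv : c.map Δ * ((c.map (antipode k)).map ι₂ * (c.map (antipode k)).map ι₁) = 1 := by
    rw [hΔ, Matrix.mul_assoc, ← Matrix.mul_assoc (c.map ι₂), hc.map_mul_map_map_antipode,
      Matrix.one_mul, hc.map_mul_map_map_antipode]
  have h := left_inv_eq_right_inv (hc.map_map_antipode_mul_map Δ) hinv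
  refine (congrFun (congrFun h i) j).trans ?_
  simp [Matrix.mul_apply, ι₁, ι₂]

theorem contragredient (hc : IsMultiplicative k c) :
    IsMultiplicative k (c.map (antipode k))ᵀ where
  comul i j := hc.comul_antipode j i
  counit i j := by
    simp [hc.counit, Matrix.one_apply, eq_comm]

end IsMultiplicative

end Antipode

section Normal

variable {k : Type u} [Field k] {G H : Type u} [Ring G] [HopfAlgebra k G] [Ring H]
  [HopfAlgebra k H]

theorem map_antipode (π : G →ₐc[k] H) (x : G) : π (antipode k x) = antipode k (π x) := by
  suffices (π : G →ₗ[k] H) ∘ₗ antipode k = antipode k ∘ₗ (π : G →ₗ[k] H) from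
    LinearMap.congr_fun this x
  refine linearMap_ext_of_isMultiplicative fun n c hc i j ↦ ?_
  have h := left_inv_eq_right_inv (hc.map_map_antipode_mul_map (π : G →ₐ[k] H))
    (hc.map π).mul_map_antipode
  exact congrFun (congrFun h i) j

section AdjointCoaction

variable {n : Type*} [Fintype n] [DecidableEq n] {c : Matrix n n G}

theorem IsMultiplicative.comul2 (hc : IsMultiplicative k c) (i j : n) :
    comul2 k G (c i j) = ∑ a, ∑ b, c i a ⊗ₜ[k] (c a b ⊗ₜ[k] c b j) := by
  simp [QG.comul2, hc.comul, TensorProduct.tmul_sum]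

theorem IsMultiplicative.adL (hc : IsMultiplicative k c) (i j : n) :
    adL k G (c i j) = ∑ a, ∑ b, (c i a * antipode k (c b j)) ⊗ₜ[k] c a b := by
  simp [QG.adL, hc.comul2]

theorem IsMultiplicative.adR (hc : IsMultiplicative k c) (i j : n) :
    adR k G (c i j) = ∑ a, ∑ b, c a b ⊗ₜ[k] (antipode k (c i a) * c b j) := by
  simp [QG.adR, hc.comul2]

end AdjointCoaction

section Involutory

variable (hinv : ∀ x : G, antipode k (antipode k x) = x)
include hinv

theorem adR_eq_comm_map_antipode_adL_antipode (x : G) :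
    adR k G x = TensorProduct.comm k G G
      (TensorProduct.map (antipode k) (antipode k) (adL k G (antipode k x))) := by
  suffices adR k G = (TensorProduct.comm k G G).toLinearMap ∘ₗ
      TensorProduct.map (antipode k) (antipode k) ∘ₗ adL k G ∘ₗ antipode k from
    LinearMap.congr_fun this x
  refine linearMap_ext_of_isMultiplicative fun n c hc i j ↦ ?_
  have hadL := hc.contragredient.adL j i
  simp only [Matrix.transpose_apply, Matrix.map_apply, hinv] at hadL
  simp only [hc.adR, LinearMap.comp_apply, hadL, map_sum, TensorProduct.map_tmul,
    LinearEquiv.coe_coe, TensorProduct.comm_tmul, antipode_mul_antidistrib, hinv]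
  exact Finset.sum_comm

theorem isRightNormal_of_isLeftNormal {π : G →ₐc[k] H}
    (h : IsLeftNormal k G (π : G →ₗ[k] H)) : IsRightNormal k G (π : G →ₗ[k] H) := by
  obtain ⟨lam, hlam⟩ := h
  have hswap : (TensorProduct.comm k G H).toLinearMap ∘ₗ
      TensorProduct.map (antipode k) (antipode k) ∘ₗ (π : G →ₗ[k] H).lTensor G =
      (π : G →ₗ[k] H).rTensor G ∘ₗ (TensorProduct.comm k G G).toLinearMap ∘ₗ
        TensorProduct.map (antipode k) (antipode k) := by
    ext x y
    simp [map_antipode]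
  refine ⟨(TensorProduct.comm k G H).toLinearMap ∘ₗ
    TensorProduct.map (antipode k) (antipode k) ∘ₗ lam ∘ₗ antipode k, LinearMap.ext fun x ↦ ?_⟩
  have hx := LinearMap.congr_fun hlam (antipode k x)
  have hπ : antipode k ((π : G →ₗ[k] H) x) = (π : G →ₗ[k] H) (antipode k x) :=
    (map_antipode π x).symm
  simp only [LinearMap.comp_apply] at hx ⊢
  rw [hπ, hx, adR_eq_comm_map_antipode_adL_antipode hinv]
  exact LinearMap.congr_fun hswap _

theorem isLeftNormal_of_isRightNormal {π : G →ₐc[k] H}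
    (h : IsRightNormal k G (π : G →ₗ[k] H)) : IsLeftNormal k G (π : G →ₗ[k] H) := by
  obtain ⟨ρ, hρ⟩ := h
  have hswap : (TensorProduct.comm k H G).toLinearMap ∘ₗ
      TensorProduct.map (antipode k) (antipode k) ∘ₗ (π : G →ₗ[k] H).rTensor G ∘ₗ
      (TensorProduct.comm k G G).toLinearMap ∘ₗ TensorProduct.map (antipode k) (antipode k) =
      (π : G →ₗ[k] H).lTensor G := by
    ext x y
    simp [← map_antipode, hinv]
  refine ⟨(TensorProduct.comm k H G).toLinearMap ∘ₗ
    TensorProduct.map (antipode k) (antipode k) ∘ₗ ρ ∘ₗ antipode k, LinearMap.ext fun x ↦ ?_⟩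
  have hx := LinearMap.congr_fun hρ (antipode k x)
  have hπ : antipode k ((π : G →ₗ[k] H) x) = (π : G →ₗ[k] H) (antipode k x) :=
    (map_antipode π x).symm
  simp only [LinearMap.comp_apply, adR_eq_comm_map_antipode_adL_antipode hinv, hinv] at hx ⊢
  rw [hπ, hx]
  exact LinearMap.congr_fun hswap _

end Involutory

end Normal

/-! ### Conjugation of matrices by a multiplicative matrix -/

section MatrixSlices

variable {k : Type*} [CommRing k] {D D' : Type*}

section Module

variable [AddCommGroup D] [Module k D] {m n : Type*}

/-- A matrix over `D`, seen as an element of `Mat(k) ⊗ D`, lies in `U ⊗ D`: all its slices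
`(f(Xᵢⱼ))` belong to `U`. -/
def HasSlicesIn (U : Submodule k (Matrix m n k)) (X : Matrix m n D) : Prop :=
  ∀ f : D →ₗ[k] k, X.map f ∈ U

theorem HasSlicesIn.map [AddCommGroup D'] [Module k D'] {U : Submodule k (Matrix m n k)}
    {X : Matrix m n D} (hX : HasSlicesIn U X) (φ : D →ₗ[k] D') : HasSlicesIn U (X.map φ) :=
  fun f ↦ hX (f ∘ₗ φ)

theorem exists_eq_sum_map_coord_smul [Finite m] [Finite n] {ι : Type*} (b : Module.Basis ι k D)
    (X : Matrix m n D) :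
    ∃ s : Finset ι, ∀ i j, X i j = ∑ l ∈ s, X.map (b.coord l) i j • b l := by
  classical
  have := Fintype.ofFinite m
  have := Fintype.ofFinite n
  refine ⟨Finset.univ.biUnion fun p : m × n ↦ (b.repr (X p.1 p.2)).support, fun i j ↦ ?_⟩
  conv_lhs => rw [← b.linearCombination_repr (X i j), Finsupp.linearCombination_apply]
  exact Finsupp.sum_of_support_subset _
    (Finset.subset_biUnion_of_mem (fun p : m × n ↦ (b.repr (X p.1 p.2)).support)
      (Finset.mem_univ (i, j))) _ fun _ _ ↦ zero_smul k _

end Module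

variable [Ring D] [Algebra k D] [Ring D'] [Algebra k D'] {m n p : Type*} [Fintype n]

theorem map_algebraMap_mul (t : Matrix m n k) (X : Matrix n p D) (φ : D →ₗ[k] D') :
    (t.map (algebraMap k D) * X).map φ = t.map (algebraMap k D') * X.map φ := by
  ext i j
  simp [Matrix.mul_apply, ← Algebra.smul_def]

theorem map_mul_algebraMap (X : Matrix m n D) (t : Matrix n p k) (φ : D →ₗ[k] D') :
    (X * t.map (algebraMap k D)).map φ = X.map φ * t.map (algebraMap k D') := by
  ext i j
  simp [Matrix.mul_apply, ← Algebra.smul_def, ← Algebra.commutes]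

theorem trace_map_linearMap (X : Matrix n n D) (f : D →ₗ[k] k) : (X.map f).trace = f X.trace := by
  simp [Matrix.trace]

theorem map_mul_eq_sum {ι : Type*} {b : Module.Basis ι k D} {s : Finset ι} {X : Matrix m n D}
    (hs : ∀ i j, X i j = ∑ l ∈ s, X.map (b.coord l) i j • b l) (Y : Matrix n p D)
    (f : D →ₗ[k] k) :
    (X * Y).map f = ∑ l ∈ s, X.map (b.coord l) * Y.map (f ∘ₗ LinearMap.mulLeft k (b l)) := by
  ext i j
  simp only [Matrix.map_apply, Matrix.mul_apply, Matrix.sum_apply, map_sum]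
  rw [Finset.sum_comm]
  refine Finset.sum_congr rfl fun a _ ↦ ?_
  conv_lhs => rw [hs i a]
  simp [Finset.sum_mul]

theorem map_includeLeft_mul_map_includeRight (X : Matrix m n D) (Y : Matrix n p D')
    (f : D →ₗ[k] k) (g : D' →ₗ[k] k) :
    (X.map (Algebra.TensorProduct.includeLeft : D →ₐ[k] D ⊗[k] D') *
      Y.map (Algebra.TensorProduct.includeRight : D' →ₐ[k] D ⊗[k] D')).map
        (LinearMap.mul' k k ∘ₗ TensorProduct.map f g) = X.map f * Y.map g := by
  ext i j
  simp [Matrix.mul_apply]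

theorem map_includeRight_mul_map_includeLeft (Y : Matrix m n D') (X : Matrix n p D)
    (f : D →ₗ[k] k) (g : D' →ₗ[k] k) :
    (Y.map (Algebra.TensorProduct.includeRight : D' →ₐ[k] D ⊗[k] D') *
      X.map (Algebra.TensorProduct.includeLeft : D →ₐ[k] D ⊗[k] D')).map
        (LinearMap.mul' k k ∘ₗ TensorProduct.map f g) = Y.map g * X.map f := by
  ext i j
  simp [Matrix.mul_apply, mul_comm]

end MatrixSlices

section Trace

variable {k : Type*} [Field k] {D : Type*} [Ring D] [Algebra k D] {n : Type*} [Fintype n]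

theorem HasSlicesIn.mul [DecidableEq n] {U W : Submodule k (Matrix n n k)} {X Y : Matrix n n D}
    (hX : HasSlicesIn U X) (hY : HasSlicesIn W Y) : HasSlicesIn (U * W) (X * Y) := by
  intro f
  obtain ⟨s, hs⟩ := exists_eq_sum_map_coord_smul (Module.Free.chooseBasis k D) X
  rw [map_mul_eq_sum hs]
  exact Submodule.sum_mem _ fun l _ ↦ Submodule.mul_mem_mul (hX _) (hY _)

/-- The orthogonal of a space of matrices for the trace form `(x, y) ↦ tr(xy)`. -/
noncomputable def traceOrthogonal (U : Submodule k (Matrix n n k)) :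
    Submodule k (Matrix n n k) :=
  LinearMap.BilinForm.orthogonal
    ((LinearMap.mul k (Matrix n n k)).compr₂ (traceLinearMap n k k)) U

theorem mem_traceOrthogonal_iff {U : Submodule k (Matrix n n k)} {x : Matrix n n k} :
    x ∈ traceOrthogonal U ↔ ∀ u ∈ U, (u * x).trace = 0 :=
  LinearMap.BilinForm.mem_orthogonal_iff

theorem HasSlicesIn.trace_mul_eq_zero {U : Submodule k (Matrix n n k)} {X : Matrix n n D}
    (hX : HasSlicesIn U X) {x : Matrix n n k} (hx : ∀ u ∈ U, (x * u).trace = 0) :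
    (x.map (algebraMap k D) * X).trace = 0 := by
  refine eq_of_forall_dual_eq (k := k) fun f ↦ ?_
  rw [← trace_map_linearMap, map_algebraMap_mul, map_zero]
  simpa using hx _ (hX f)

end Trace

section Conjugation

variable {k : Type*} [Field k] {A : Type*} [Ring A] [HopfAlgebra k A]
  {n : Type*} [Fintype n] {c : Matrix n n A}

/-- The adjoint coaction `t ↦ c t S(c)` on square matrices, for a multiplicative matrix `c`. -/
noncomputable def conj (c : Matrix n n A) (t : Matrix n n k) : Matrix n n A :=
  c * t.map (algebraMap k A) * c.map (antipode k)

/-- A space of matrices that is a subcomodule for the adjoint coaction. -/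
def IsConjInvariant (c : Matrix n n A) (U : Submodule k (Matrix n n k)) : Prop :=
  ∀ t ∈ U, HasSlicesIn U (conj c t)

theorem IsConjInvariant.inf {U W : Submodule k (Matrix n n k)} (hU : IsConjInvariant c U)
    (hW : IsConjInvariant c W) : IsConjInvariant c (U ⊓ W) :=
  fun t ht f ↦ ⟨hU t ht.1 f, hW t ht.2 f⟩

theorem trace_mul_conj_apply (c : Matrix n n A) (s t : Matrix n n k) :
    (s.map (algebraMap k A) * conj c t).trace =
      ∑ p : n × n, ∑ q : n × n,
        (s p.1 p.2 * t q.1 q.2) • (c p.2 q.1 * antipode k (c q.2 p.1)) := by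
  simp only [conj, Matrix.trace, Matrix.diag, Matrix.mul_apply, Matrix.map_apply, Finset.mul_sum,
    Finset.sum_mul, Fintype.sum_prod_type, ← Algebra.smul_def, ← Algebra.commutes, smul_mul_assoc,
    smul_smul]
  exact Finset.sum_congr rfl fun i _ ↦ Finset.sum_congr rfl fun j _ ↦ Finset.sum_comm

theorem antipode_trace_mul_conj (hinv : ∀ x : A, antipode k (antipode k x) = x)
    (s t : Matrix n n k) :
    antipode k (s.map (algebraMap k A) * conj c t).trace =
      (t.map (algebraMap k A) * conj c s).trace := by
  simp only [trace_mul_conj_apply, map_sum, map_smul, antipode_mul_antidistrib, hinv]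
  rw [Finset.sum_comm]
  simp only [mul_comm]

theorem IsConjInvariant.traceOrthogonal (hinv : ∀ x : A, antipode k (antipode k x) = x)
    {U : Submodule k (Matrix n n k)} (hU : IsConjInvariant c U) :
    IsConjInvariant c (traceOrthogonal U) := by
  intro x hx f
  rw [mem_traceOrthogonal_iff] at hx ⊢
  intro u hu
  have hzero : (u.map (algebraMap k A) * conj c x).trace = 0 := by
    rw [← hinv (trace _), antipode_trace_mul_conj hinv, (hU u hu).trace_mul_eq_zero, map_zero]
    intro v hv
    rw [trace_mul_comm, hx v hv]
  have hslice := map_algebraMap_mul u (conj c x) f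
  rw [Algebra.algebraMap_self, RingHom.coe_id, Matrix.map_id] at hslice
  rw [← hslice, trace_map_linearMap, hzero, map_zero]

theorem conj_add (c : Matrix n n A) (s t : Matrix n n k) :
    conj c (s + t) = conj c s + conj c t := by
  rw [conj, Matrix.map_add _ (map_add (algebraMap k A)), Matrix.mul_add, Matrix.add_mul, conj, conj]

variable [DecidableEq n]

theorem IsMultiplicative.conj_mul (hc : IsMultiplicative k c) (s t : Matrix n n k) :
    conj c (s * t) = conj c s * conj c t := by
  simp only [conj, Matrix.map_mul, Matrix.mul_assoc]
  rw [← Matrix.mul_assoc (c.map _) c, hc.map_antipode_mul, Matrix.one_mul]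

theorem IsMultiplicative.conj_mul_self (hc : IsMultiplicative k c) (t : Matrix n n k) :
    conj c t * c = c * t.map (algebraMap k A) := by
  rw [conj, Matrix.mul_assoc, hc.map_antipode_mul, Matrix.mul_one]

theorem IsConjInvariant.mul (hc : IsMultiplicative k c) {U W : Submodule k (Matrix n n k)}
    (hU : IsConjInvariant c U) (hW : IsConjInvariant c W) : IsConjInvariant c (U * W) := by
  intro t ht
  induction ht using Submodule.mul_induction_on' with
  | mem_mul_mem s hs t ht => exact hc.conj_mul s t ▸ (hU s hs).mul (hW t ht)
  | add s _ t _ hs ht =>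
    intro f
    have hadd : (conj c (s + t)).map f = (conj c s).map f + (conj c t).map f := by
      rw [conj_add, Matrix.map_add _ (map_add f)]
    exact hadd ▸ Submodule.add_mem _ (hs f) (ht f)

end Conjugation

/-! ### Slice algebras and their commutants -/

theorem commute_conj_of_commute_conj {M : Type*} [Monoid M] {u v x z : M} (huv : u * v = 1)
    (h : Commute z (v * x * u)) : Commute (u * z * v) x := by
  calc u * z * v * x = u * (z * (v * x * u)) * v := by simp only [mul_assoc, huv, mul_one]
    _ = u * (v * x * u * z) * v := by rw [h.eq]
    _ = u * v * (x * (u * z * v)) := by simp only [mul_assoc]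
    _ = x * (u * z * v) := by rw [huv, one_mul]

open scoped Kronecker

section Kronecker

variable {k : Type*} [CommRing k] {A : Type*} [Ring A]

theorem IsMultiplicative.kronecker [Bialgebra k A] {m n : Type*} [Fintype m] [DecidableEq m]
    [Fintype n] [DecidableEq n] {c : Matrix m m A} {d : Matrix n n A} (hc : IsMultiplicative k c)
    (hd : IsMultiplicative k d) : IsMultiplicative k (c ⊗ₖ d) where
  comul p q := by
    rw [kronecker_apply, Bialgebra.comul_mul, hc.comul, hd.comul, Finset.sum_mul_sum,
      Fintype.sum_prod_type]
    simp
  counit p q := by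
    rw [kronecker_apply, Bialgebra.counit_mul, hc.counit, hd.counit, ← kronecker_apply,
      one_kronecker_one]

end Kronecker

section AdjointComplement

variable {k : Type u} [Field k] {A : Type u} [Ring A] [HopfAlgebra k A]

theorem map_conj_of_curry {n : Type*} [Fintype n] (c : Matrix n n A) (f : A →ₗ[k] k)
    (v : n × n → k) :
    (conj c (of (Function.curry v))).map f =
      of (Function.curry ((c ⊗ₖ (c.map (antipode k))ᵀ).map f *ᵥ v)) := by
  ext i j
  simp only [Function.curry, mulVec, dotProduct, conj, Matrix.map_apply, kroneckerMap_apply,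
    transpose_apply, Matrix.mul_apply, Finset.sum_mul, map_sum, Fintype.sum_prod_type, of_apply,
    ← Algebra.commutes, ← Algebra.smul_def, smul_mul_assoc, map_smul, smul_eq_mul]
  rw [Finset.sum_comm]
  simp only [mul_comm]

variable {n : Type} [Fintype n] [DecidableEq n] {c : Matrix n n A}

theorem IsMultiplicative.exists_isCompl_isConjInvariant (hA : IsCosemisimple k A)
    (hc : IsMultiplicative k c) {U : Submodule k (Matrix n n k)} (hU : IsConjInvariant c U) :
    ∃ W, IsConjInvariant c W ∧ IsCompl U W := by
  let e : (n × n → k) ≃ₗ[k] Matrix n n k := LinearEquiv.curry k k n n ≪≫ₗ ofLinearEquiv k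
  have he (v : n × n → k) (f : A →ₗ[k] k) :
      (conj c (e v)).map f = e ((c ⊗ₖ (c.map (antipode k))ᵀ).map f *ᵥ v) :=
    map_conj_of_curry c f v
  have hU' : IsSliceInvariant (c ⊗ₖ (c.map (antipode k))ᵀ) (U.comap e.toLinearMap) :=
    fun f v hv ↦ (congrArg (· ∈ U) (he v f)).mp (hU _ hv f)
  obtain ⟨W, hW, hUW⟩ :=
    (hc.kronecker hc.contragredient).exists_isCompl_isSliceInvariant hA hU'
  refine ⟨W.map e.toLinearMap, ?_, ?_⟩
  · rintro _ ⟨v, hv, rfl⟩ f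
    exact ⟨_, hW f v hv, (he v f).symm⟩
  · rw [← Submodule.map_comap_eq_of_surjective e.surjective U]
    exact (Submodule.orderIsoMapComap e).isCompl hUW

end AdjointComplement

section SliceAlgebra

variable {k : Type*} [CommRing k] {C : Type*} [AddCommGroup C] [Module k C] [Coalgebra k C]
  {n : Type*} [Fintype n] [DecidableEq n] {c : Matrix n n C}

/-- The algebra of all slices `(f(cᵢⱼ))` of a multiplicative matrix: the image of the dual
algebra acting on the comodule `c`. -/
noncomputable def IsMultiplicative.sliceAlgebra (hc : IsMultiplicative k c) :
    Subalgebra k (Matrix n n k) :=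
  hc.dualAlgHom.range

namespace IsMultiplicative

theorem mem_sliceAlgebra_iff (hc : IsMultiplicative k c) {t : Matrix n n k} :
    t ∈ hc.sliceAlgebra ↔ ∃ f : C →ₗ[k] k, c.map f = t :=
  ⟨fun ⟨f, hf⟩ ↦ ⟨f.ofConv, hf⟩, fun ⟨f, hf⟩ ↦ ⟨WithConv.toConv f, hf⟩⟩

theorem map_mem_sliceAlgebra (hc : IsMultiplicative k c) (f : C →ₗ[k] k) :
    c.map f ∈ hc.sliceAlgebra :=
  hc.mem_sliceAlgebra_iff.mpr ⟨f, rfl⟩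

/-- The commutant of the slices: the endomorphism algebra of the comodule with coefficient
matrix `c`. -/
noncomputable def sliceCentralizer (hc : IsMultiplicative k c) : Subalgebra k (Matrix n n k) :=
  Subalgebra.centralizer k (hc.sliceAlgebra : Set (Matrix n n k))

theorem mem_sliceCentralizer_iff_forall (hc : IsMultiplicative k c) {z : Matrix n n k} :
    z ∈ hc.sliceCentralizer ↔ ∀ f : C →ₗ[k] k, c.map f * z = z * c.map f := by
  refine (Subalgebra.mem_centralizer_iff k).trans ⟨fun h f ↦ h _ (hc.map_mem_sliceAlgebra f), ?_⟩
  intro h t ht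
  obtain ⟨f, rfl⟩ := hc.mem_sliceAlgebra_iff.mp ht
  exact h f

end IsMultiplicative

end SliceAlgebra

section SliceCentralizer

variable {k : Type*} [Field k] {A : Type*} [Ring A] [HopfAlgebra k A]
  {n : Type*} [Fintype n] [DecidableEq n] {c : Matrix n n A}

theorem IsMultiplicative.mem_sliceCentralizer_iff (hc : IsMultiplicative k c) {z : Matrix n n k} :
    z ∈ hc.sliceCentralizer ↔
      c * z.map (algebraMap k A) = z.map (algebraMap k A) * c := by
  have hl (f : A →ₗ[k] k) : (c * z.map (algebraMap k A)).map f = c.map f * z := by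
    simpa using map_mul_algebraMap c z f
  have hr (f : A →ₗ[k] k) : (z.map (algebraMap k A) * c).map f = z * c.map f := by
    simpa using map_algebraMap_mul z c f
  rw [hc.mem_sliceCentralizer_iff_forall]
  refine ⟨fun h ↦ ?_, fun h f ↦ by rw [← hl, h, hr]⟩
  ext i j
  refine eq_of_forall_dual_eq (k := k) fun f ↦ ?_
  have := h f
  rw [← hl, ← hr] at this
  exact congrFun (congrFun this i) j

theorem IsMultiplicative.mem_sliceCentralizer_iff_conj_eq (hc : IsMultiplicative k c)
    {z : Matrix n n k} :
    z ∈ hc.sliceCentralizer ↔ conj c z = z.map (algebraMap k A) := by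
  rw [hc.mem_sliceCentralizer_iff, ← hc.conj_mul_self]
  refine ⟨fun h ↦ ?_, fun h ↦ by rw [h]⟩
  have := congrArg (· * c.map (antipode k)) h
  simpa [Matrix.mul_assoc, hc.mul_map_antipode] using this

end SliceCentralizer

/-! ### Trace forms on the slice algebra -/

section Normality

variable {k : Type u} [Field k] {G H : Type u} [Ring G] [HopfAlgebra k G] [Ring H]
  [HopfAlgebra k H] {n : Type*} [Fintype n] {c : Matrix n n G}

theorem map_conj (π : G →ₐc[k] H) (c : Matrix n n G) (t : Matrix n n k) :
    (conj c t).map π = conj (c.map π) t := by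
  have hS : (c.map (antipode k)).map π = (c.map π).map (antipode k) := by
    ext i j
    exact map_antipode π (c i j)
  have ht : (t.map (algebraMap k G)).map π = t.map (algebraMap k H) := by
    ext i j
    exact AlgHomClass.commutes π (t i j)
  rw [conj, Matrix.map_mul, Matrix.map_mul, hS, ht, conj]

theorem IsConjInvariant.map {U : Submodule k (Matrix n n k)} (hU : IsConjInvariant c U)
    (π : G →ₐc[k] H) : IsConjInvariant (c.map π) U :=
  fun t ht ↦ map_conj π c t ▸ (hU t ht).map (π : G →ₗ[k] H)

variable [DecidableEq n]

theorem isConjInvariant_sliceAlgebra (hc : IsMultiplicative k c) {π : G →ₐc[k] H}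
    (hπ : IsLeftNormal k G (π : G →ₗ[k] H)) :
    IsConjInvariant c (hc.map π).sliceAlgebra.toSubmodule := by
  obtain ⟨lam, hlam⟩ := hπ
  intro t ht g
  obtain ⟨f, rfl⟩ := (hc.map π).mem_sliceAlgebra_iff.mp ht
  refine (hc.map π).mem_sliceAlgebra_iff.mpr
    ⟨LinearMap.mul' k k ∘ₗ TensorProduct.map g f ∘ₗ lam, ?_⟩
  ext i j
  have hij : lam (π (c i j)) = ∑ a, ∑ b, (c i a * antipode k (c b j)) ⊗ₜ[k] π (c a b) := by
    refine (LinearMap.congr_fun hlam (c i j)).trans ?_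
    simp [hc.adL]
  simp only [Matrix.map_apply, LinearMap.comp_apply, hij, map_sum, TensorProduct.map_tmul,
    LinearMap.mul'_apply, conj, Matrix.mul_apply, Finset.sum_mul, ← Algebra.commutes,
    ← Algebra.smul_def, smul_mul_assoc, map_smul, smul_eq_mul]
  rw [Finset.sum_comm]
  simp only [mul_comm]

theorem isConjInvariant_sliceCentralizer (hc : IsMultiplicative k c) {π : G →ₐc[k] H}
    (hπ : IsRightNormal k G (π : G →ₗ[k] H)) :
    IsConjInvariant c (hc.map π).sliceCentralizer.toSubmodule := by
  obtain ⟨ρ, hρ⟩ := hπ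
  intro z hz g
  refine (hc.map π).mem_sliceCentralizer_iff_forall.mpr fun f ↦ ?_
  let ιH : H →ₐ[k] H ⊗[k] G := Algebra.TensorProduct.includeLeft
  let ιG : G →ₐ[k] H ⊗[k] G := Algebra.TensorProduct.includeRight
  let Z := z.map (algebraMap k (H ⊗[k] G))
  have hcoaction : (c.map π).map ρ =
      (c.map (antipode k)).map ιG * (c.map π).map ιH * c.map ιG := by
    ext i j
    refine (LinearMap.congr_fun hρ (c i j)).trans ?_
    simp only [LinearMap.comp_apply, hc.adR, map_sum, LinearMap.rTensor_tmul, Matrix.mul_apply,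
      Matrix.map_apply, Finset.sum_mul]
    rw [Finset.sum_comm]
    simp [ιG, ιH]
  have hcomm : Z * (c.map π).map ρ = (c.map π).map ρ * Z := by
    rw [← map_algebraMap_mul, ← map_mul_algebraMap, (hc.map π).mem_sliceCentralizer_iff.mp hz]
  have hconj : (conj c z).map ιG = c.map ιG * Z * (c.map (antipode k)).map ιG := by
    rw [conj, Matrix.map_mul, Matrix.map_mul]
    congr 2
    ext i j
    exact ιG.commutes (z i j)
  have hcomm' : Commute ((conj c z).map ιG) ((c.map π).map ιH) := by
    rw [hconj]
    rw [hcoaction] at hcomm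
    exact commute_conj_of_commute_conj (hc.map_mul_map_map_antipode ιG) hcomm
  rw [← map_includeLeft_mul_map_includeRight, ← map_includeRight_mul_map_includeLeft]
  exact congrArg (Matrix.map · _) hcomm'.symm.eq

end Normality

section TraceForm

variable {k : Type*} [Field k] {A : Type*} [Ring A] [HopfAlgebra k A]
  {n : Type*} [Fintype n] {c : Matrix n n A}

section Basis

variable {ι : Type*} {b : Module.Basis ι k A} {s : Finset ι}
  (hs : ∀ i j, c i j = ∑ l ∈ s, c.map (b.coord l) i j • b l)
include hs

theorem map_conj_eq_sum (t : Matrix n n k) (f : A →ₗ[k] k) :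
    (conj c t).map f = ∑ l ∈ s,
      c.map (b.coord l) * (t * c.map (f ∘ₗ LinearMap.mulLeft k (b l) ∘ₗ antipode k)) := by
  rw [conj, Matrix.mul_assoc, map_mul_eq_sum hs]
  simp only [map_algebraMap_mul]
  rfl

/-- For `S² = 1` this is the identity `∑ₗ cₗⱼ S(cᵢₗ) = δᵢⱼ`, sliced by `f`. -/
theorem IsMultiplicative.sum_map_mul_map_eq [DecidableEq n] (hc : IsMultiplicative k c)
    (hinv : ∀ x : A, antipode k (antipode k x) = x) (f : A →ₗ[k] k) :
    ∑ l ∈ s, c.map (f ∘ₗ LinearMap.mulLeft k (b l) ∘ₗ antipode k) * c.map (b.coord l) =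
      f 1 • 1 := by
  have hS : (c.map (antipode k))ᵀ.map (antipode k) = cᵀ := by
    ext i j
    exact hinv (c j i)
  have hmul : cᵀ * (c.map (antipode k))ᵀ = 1 := hS ▸ hc.contragredient.map_antipode_mul
  have hsum := map_mul_eq_sum (X := cᵀ) (fun i j ↦ hs j i) (c.map (antipode k))ᵀ f
  rw [hmul] at hsum
  apply transpose_injective
  rw [transpose_sum]
  simp only [transpose_mul]
  refine hsum.symm.trans ?_
  ext i j
  simp [Matrix.one_apply, apply_ite f, eq_comm]

end Basis

variable [DecidableEq n]

theorem IsMultiplicative.trace_mul_conj (hc : IsMultiplicative k c)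
    (hinv : ∀ x : A, antipode k (antipode k x) = x) {z : Matrix n n k}
    (hz : ∀ x ∈ hc.sliceAlgebra, ∀ y ∈ hc.sliceAlgebra,
      (z * (x * y)).trace = (z * (y * x)).trace)
    {t : Matrix n n k} (ht : t ∈ hc.sliceAlgebra) :
    (z.map (algebraMap k A) * conj c t).trace = algebraMap k A (z * t).trace := by
  refine eq_of_forall_dual_eq (k := k) fun f ↦ ?_
  obtain ⟨s, hs⟩ := exists_eq_sum_map_coord_smul (Module.Free.chooseBasis k A) c
  set b := Module.Free.chooseBasis k A
  let x l := c.map (b.coord l)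
  let y l := c.map (f ∘ₗ LinearMap.mulLeft k (b l) ∘ₗ antipode k)
  calc f (z.map (algebraMap k A) * conj c t).trace
      = ∑ l ∈ s, (z * (x l * (t * y l))).trace := by
        rw [← trace_map_linearMap, map_algebraMap_mul, map_conj_eq_sum hs,
          Algebra.algebraMap_self, RingHom.coe_id, Matrix.map_id, Matrix.mul_sum, trace_sum]
    _ = ∑ l ∈ s, (z * (t * (y l * x l))).trace := by
        refine Finset.sum_congr rfl fun l _ ↦ ?_
        rw [hz _ (hc.map_mem_sliceAlgebra _) _ (mul_mem ht (hc.map_mem_sliceAlgebra _)),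
          Matrix.mul_assoc]
    _ = f (algebraMap k A (z * t).trace) := by
        rw [← trace_sum, ← Matrix.mul_sum, ← Matrix.mul_sum, hc.sum_map_mul_map_eq hs hinv]
        simp [Algebra.algebraMap_eq_smul_one, mul_comm]

end TraceForm

section TraceFormRepresentation

theorem exists_forall_apply_eq_trace_mul {k : Type*} [CommSemiring k] {n : Type*} [Fintype n]
    (φ : Matrix n n k →ₗ[k] k) : ∃ z, ∀ t, φ t = (z * t).trace := by
  classical
  refine ⟨of fun i j ↦ φ (single j i 1), fun t ↦ ?_⟩
  conv_lhs => rw [matrix_eq_sum_single t]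
  simp only [map_sum, trace, diag, Matrix.mul_apply, of_apply]
  rw [Finset.sum_comm]
  refine Finset.sum_congr rfl fun j _ ↦ Finset.sum_congr rfl fun i _ ↦ ?_
  rw [mul_comm, ← smul_eq_mul, ← map_smul, smul_single, smul_eq_mul, mul_one]

variable {k : Type u} [Field k] {G H : Type u} [Ring G] [HopfAlgebra k G] [Ring H]
  [HopfAlgebra k H] {n : Type} [Fintype n] [DecidableEq n] {c : Matrix n n G}

theorem IsMultiplicative.mem_sliceCentralizer_of_forall_trace (hc : IsMultiplicative k c)
    (hinv : ∀ x : G, antipode k (antipode k x) = x) {z : Matrix n n k}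
    (hz : ∀ t : Matrix n n k,
      (z.map (algebraMap k G) * conj c t).trace = algebraMap k G (z * t).trace) :
    z ∈ hc.sliceCentralizer := by
  rw [hc.mem_sliceCentralizer_iff_conj_eq]
  have htrace (t : Matrix n n k) : (t.map (algebraMap k G) * conj c z).trace =
      (t.map (algebraMap k G) * z.map (algebraMap k G)).trace := by
    rw [← antipode_trace_mul_conj hinv, hz, Algebra.algebraMap_eq_smul_one, map_smul, antipode_one,
      ← Algebra.algebraMap_eq_smul_one, trace_mul_comm, ← Matrix.map_mul]
    exact AddMonoidHom.map_trace (algebraMap k G) (t * z)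
  ext i j
  simpa [Matrix.map_single, trace_single_mul] using htrace (single j i 1)

theorem exists_mem_sliceCentralizer_forall_trace_eq (hG : IsCosemisimple k G)
    (hc : IsMultiplicative k c) {π : G →ₐc[k] H}
    (hinv : ∀ x : H, antipode k (antipode k x) = x)
    (hT : IsConjInvariant c (hc.map π).sliceAlgebra.toSubmodule) {φ : Matrix n n k →ₗ[k] k}
    (hφ : ∀ x ∈ (hc.map π).sliceAlgebra, ∀ y ∈ (hc.map π).sliceAlgebra, φ (x * y) = φ (y * x)) :
    ∃ z ∈ (hc.map π).sliceCentralizer, ∀ t ∈ (hc.map π).sliceAlgebra, φ t = (z * t).trace := by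
  set T := (hc.map π).sliceAlgebra
  obtain ⟨N, hN, hTN⟩ := hc.exists_isCompl_isConjInvariant hG hT
  obtain ⟨z, hz⟩ := exists_forall_apply_eq_trace_mul
    (LinearMap.ofIsCompl hTN (φ.domRestrict T.toSubmodule) 0)
  have hzT (t) (ht : t ∈ T) : φ t = (z * t).trace :=
    (LinearMap.ofIsCompl_apply_left hTN ⟨t, ht⟩).symm.trans (hz t)
  have hzN (t) (ht : t ∈ N) : (z * t).trace = 0 :=
    (hz t).symm.trans (LinearMap.ofIsCompl_apply_right hTN ⟨t, ht⟩)
  refine ⟨z, (hc.map π).mem_sliceCentralizer_of_forall_trace hinv fun t ↦ ?_, hzT⟩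
  obtain ⟨x, hx, y, hy, rfl⟩ : ∃ x ∈ T.toSubmodule, ∃ y ∈ N, x + y = t :=
    Submodule.mem_sup.mp (hTN.sup_eq_top ▸ Submodule.mem_top)
  have hconjx : (z.map (algebraMap k H) * conj (c.map π) x).trace =
      algebraMap k H (z * x).trace := by
    refine (hc.map π).trace_mul_conj hinv (fun a ha b hb ↦ ?_) hx
    rw [← hzT _ (mul_mem ha hb), hφ a ha b hb, hzT _ (mul_mem hb ha)]
  have hconjy : (z.map (algebraMap k H) * conj (c.map π) y).trace = 0 :=
    ((hN.map π) y hy).trace_mul_eq_zero hzN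
  rw [conj_add, Matrix.mul_add, trace_add, hconjx, hconjy, Matrix.mul_add, trace_add, hzN y hy,
    add_zero, add_zero]

end TraceFormRepresentation

/-! ### The radical of the slice algebra -/

section Radical

theorem mem_jacobson_of_forall_trace {k : Type*} [Field k] [IsAlgClosed k] {T : Type*} [Ring T]
    [Algebra k T] [Module.Finite k T] {t : T}
    (h : ∀ φ : T →ₗ[k] k, (∀ a b, φ (a * b) = φ (b * a)) → ∀ s, φ (t * s) = 0) :
    t ∈ Ring.jacobson T := by
  have : IsArtinianRing T := IsArtinianRing.of_finite k T
  obtain ⟨m, d, -, ⟨e⟩⟩ := IsSemisimpleRing.exists_algEquiv_pi_matrix_of_isAlgClosed k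
    (T ⧸ Ring.jacobson T)
  let p : T →ₐ[k] T ⧸ Ring.jacobson T := Ideal.Quotient.mkₐ k (Ring.jacobson T)
  have hp : Function.Surjective p := Ideal.Quotient.mkₐ_surjective k _
  suffices hpt : e (p t) = 0 from
    Ideal.Quotient.eq_zero_iff_mem.mp ((EmbeddingLike.map_eq_zero_iff (f := e)).mp hpt)
  funext i
  let φ : T →ₗ[k] k := traceLinearMap (Fin (d i)) k k ∘ₗ
    LinearMap.proj (φ := fun i ↦ Matrix (Fin (d i)) (Fin (d i)) k) i ∘ₗ
      e.toLinearMap ∘ₗ p.toLinearMap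
  have hφ (a b : T) : φ (a * b) = (e (p a) i * e (p b) i).trace := by simp [φ]
  refine ext_iff_trace_mul_right.mpr fun x ↦ ?_
  obtain ⟨s, hs⟩ := hp (e.symm (Pi.single i x))
  have hts := h φ (fun a b ↦ by rw [hφ, hφ, trace_mul_comm]) s
  rw [hφ, hs, e.apply_symm_apply, Pi.single_eq_same] at hts
  simpa using hts

theorem isSemisimpleRing_of_isCompl_jacobson_smul_top {T M : Type*} [Ring T] [IsArtinianRing T]
    [AddCommGroup M] [Module T M] [Module.Finite T M] [FaithfulSMul T M] {W : Submodule T M}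
    (hW : IsCompl (Ring.jacobson T • (⊤ : Submodule T M)) W) : IsSemisimpleRing T := by
  have hW_top : W = ⊤ := by
    refine (eq_top_or_exists_le_coatom W).resolve_right fun ⟨m, hm, hWm⟩ ↦ hm.1 ?_
    refine eq_top_iff.mpr (hW.sup_eq_top ▸ sup_le ?_ hWm)
    exact (Ring.jacobson_smul_top_le T M).trans (sInf_le hm)
  have hbot : Ring.jacobson T • (⊤ : Submodule T M) = ⊥ := by simpa [hW_top] using hW.inf_eq_bot
  refine IsArtinianRing.isSemisimpleRing_iff_jacobson.mpr (eq_bot_iff.mpr fun t ht ↦ ?_)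
  refine FaithfulSMul.eq_of_smul_eq_smul (α := M) fun v ↦ ?_
  rw [zero_smul, ← Submodule.mem_bot T, ← hbot]
  exact Submodule.smul_mem_smul ht Submodule.mem_top

theorem mem_traceOrthogonal_of_mem_jacobson {k : Type*} [Field k] {n : Type*} [Fintype n]
    [DecidableEq n] {T : Subalgebra k (Matrix n n k)} {t : T} (ht : t ∈ Ring.jacobson T) :
    (t : Matrix n n k) ∈ traceOrthogonal
      ((Subalgebra.centralizer k (T : Set (Matrix n n k))).toSubmodule * T.toSubmodule) := by
  have : IsArtinianRing T := IsArtinianRing.of_finite k T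
  rw [mem_traceOrthogonal_iff]
  intro u hu
  induction hu using Submodule.mul_induction_on' with
  | mem_mul_mem z hz s hs =>
    have hst : IsNilpotent (s * t : Matrix n n k) := by
      obtain ⟨m, hm⟩ := IsSemiprimaryRing.isNilpotent (R := T)
      have hpow := Ideal.pow_mem_pow (Ideal.mul_mem_left _ ⟨s, hs⟩ ht) m
      rw [hm] at hpow
      exact ⟨m, congrArg Subtype.val hpow⟩
    have hcomm : Commute z (s * t) :=
      (((Subalgebra.mem_centralizer_iff k).mp hz) _ (mul_mem hs t.2)).symm
    rw [Matrix.mul_assoc]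
    exact (isNilpotent_trace_of_isNilpotent (hcomm.isNilpotent_mul_left hst)).eq_zero
  | add u _ v _ hu hv => rw [Matrix.add_mul, trace_add, hu, hv, add_zero]

open scoped Matrix.Module in
theorem mulVec_mem_smul_top {k : Type*} [CommRing k] {n : Type*} [Fintype n] [DecidableEq n]
    {T : Subalgebra k (Matrix n n k)} {I : Ideal T} {x : Matrix n n k}
    (hx : x ∈ (I.restrictScalars k).map T.val.toLinearMap * ⊤) (v : n → k) :
    x *ᵥ v ∈ I • (⊤ : Submodule T (n → k)) := by
  induction hx using Submodule.mul_induction_on' with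
  | mem_mul_mem r hr y _ =>
    obtain ⟨r, hr, rfl⟩ := hr
    rw [← mulVec_mulVec]
    exact Submodule.smul_mem_smul hr (Submodule.mem_top (x := y *ᵥ v))
  | add x _ y _ hx hy =>
    rw [add_mulVec]
    exact add_mem hx hy

end Radical

section SliceRadical

variable {k : Type u} [Field k] {G H : Type u} [Ring G] [HopfAlgebra k G] [Ring H]
  [HopfAlgebra k H] {n : Type} [Fintype n] [DecidableEq n] {c : Matrix n n G}

theorem mem_jacobson_sliceAlgebra_iff [IsAlgClosed k] (hG : IsCosemisimple k G)
    (hc : IsMultiplicative k c) {π : G →ₐc[k] H}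
    (hinv : ∀ x : H, antipode k (antipode k x) = x)
    (hT : IsConjInvariant c (hc.map π).sliceAlgebra.toSubmodule) {t : (hc.map π).sliceAlgebra} :
    t ∈ Ring.jacobson (hc.map π).sliceAlgebra ↔ (t : Matrix n n k) ∈ traceOrthogonal
      ((hc.map π).sliceCentralizer.toSubmodule * (hc.map π).sliceAlgebra.toSubmodule) := by
  refine ⟨mem_traceOrthogonal_of_mem_jacobson, fun ht ↦ mem_jacobson_of_forall_trace (k := k) ?_⟩
  intro φ hφ s
  obtain ⟨φ', rfl⟩ := LinearMap.exists_extend (p := (hc.map π).sliceAlgebra.toSubmodule) φ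
  obtain ⟨z, hz, hzφ⟩ := exists_mem_sliceCentralizer_forall_trace_eq hG hc hinv hT (φ := φ')
    fun x hx y hy ↦ hφ ⟨x, hx⟩ ⟨y, hy⟩
  calc φ' (t * s) = (z * (t * s)).trace := hzφ _ (mul_mem t.2 s.2)
    _ = (z * s * t).trace := by
      rw [← hzφ _ (mul_mem t.2 s.2), Matrix.mul_assoc, ← hzφ _ (mul_mem s.2 t.2)]
      exact hφ t s
    _ = 0 := mem_traceOrthogonal_iff.mp ht _ (Submodule.mul_mem_mul hz s.2)

theorem IsConjInvariant.map_mul_mem {A : Type*} [Ring A] [HopfAlgebra k A] {c : Matrix n n A}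
    (hc : IsMultiplicative k c) {U : Submodule k (Matrix n n k)} (hU : IsConjInvariant c U)
    (f : A →ₗ[k] k) {t : Matrix n n k} (ht : t ∈ U) : c.map f * t ∈ U * ⊤ := by
  have hslice := (hU t ht).mul (W := ⊤) (Y := c) (fun _ ↦ Submodule.mem_top) f
  rw [hc.conj_mul_self, map_mul_algebraMap] at hslice
  simpa using hslice

open scoped Matrix.Module

theorem IsConjInvariant.isSliceInvariant_smul_top (hc : IsMultiplicative k c)
    {T : Subalgebra k (Matrix n n k)} {I : Ideal T}
    (hI : IsConjInvariant c ((I.restrictScalars k).map T.val.toLinearMap)) :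
    IsSliceInvariant c ((I • (⊤ : Submodule T (n → k))).restrictScalars k) := by
  intro f v hv
  rw [Submodule.restrictScalars_mem] at hv ⊢
  induction hv using Submodule.smul_induction_on' with
  | smul r hr w _ =>
    have hsmul : r • w = (r : Matrix n n k) *ᵥ w := rfl
    rw [hsmul, mulVec_mulVec]
    exact mulVec_mem_smul_top (hI.map_mul_mem hc f (Submodule.mem_map_of_mem hr)) w
  | add v _ w _ hv hw =>
    rw [mulVec_add]
    exact add_mem hv hw

theorem isConjInvariant_jacobson_sliceAlgebra [IsAlgClosed k] (hG : IsCosemisimple k G)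
    (hc : IsMultiplicative k c) {π : G →ₐc[k] H}
    (hinvG : ∀ x : G, antipode k (antipode k x) = x)
    (hinvH : ∀ x : H, antipode k (antipode k x) = x)
    (hl : IsLeftNormal k G (π : G →ₗ[k] H)) (hr : IsRightNormal k G (π : G →ₗ[k] H)) :
    IsConjInvariant c (((Ring.jacobson (hc.map π).sliceAlgebra).restrictScalars k).map
      (hc.map π).sliceAlgebra.val.toLinearMap) := by
  have hT := isConjInvariant_sliceAlgebra hc hl
  have hZ := isConjInvariant_sliceCentralizer hc hr
  convert hT.inf ((hZ.mul hc hT).traceOrthogonal hinvG) using 1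
  ext t
  constructor
  · rintro ⟨t, ht, rfl⟩
    exact ⟨t.2, (mem_jacobson_sliceAlgebra_iff hG hc hinvH hT).mp ht⟩
  · exact fun ht ↦ ⟨⟨t, ht.1⟩, (mem_jacobson_sliceAlgebra_iff hG hc hinvH hT).mpr ht.2, rfl⟩

theorem isSemisimpleRing_sliceAlgebra [IsAlgClosed k] (hG : IsCosemisimple k G)
    (hc : IsMultiplicative k c) {π : G →ₐc[k] H}
    (hinvG : ∀ x : G, antipode k (antipode k x) = x)
    (hinvH : ∀ x : H, antipode k (antipode k x) = x)
    (hl : IsLeftNormal k G (π : G →ₗ[k] H)) (hr : IsRightNormal k G (π : G →ₗ[k] H)) :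
    IsSemisimpleRing (hc.map π).sliceAlgebra := by
  set T := (hc.map π).sliceAlgebra
  have : IsArtinianRing T := IsArtinianRing.of_finite k T
  have : Module.Finite T (n → k) := Module.Finite.of_restrictScalars_finite k T (n → k)
  have : FaithfulSMul T (n → k) :=
    ⟨fun {s t} h ↦ Subtype.ext (Matrix.ext_of_mulVec_single fun i ↦ h (Pi.single i 1))⟩
  obtain ⟨W, hW, hJW⟩ := hc.exists_isCompl_isSliceInvariant hG
    ((isConjInvariant_jacobson_sliceAlgebra hG hc hinvG hinvH hl hr).isSliceInvariant_smul_top hc)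
  let W' : Submodule T (n → k) :=
    { W with
      smul_mem' := by
        rintro ⟨t, ht⟩ w hw
        obtain ⟨f, rfl⟩ := (hc.map π).mem_sliceAlgebra_iff.mp ht
        exact hW (f ∘ₗ (π : G →ₗ[k] H)) w hw }
  exact isSemisimpleRing_of_isCompl_jacobson_smul_top (W := W')
    ((Submodule.isCompl_restrictScalars_iff k).mp hJW)

end SliceRadical

section Cosemisimple

variable {k : Type u} [Field k]

theorem IsMultiplicative.isSemisimpleModule_span_singleton {C : Type u} [AddCommGroup C]
    [Module k C] [Coalgebra k C] {n : Type*} [Fintype n] [DecidableEq n] {c : Matrix n n C}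
    (hc : IsMultiplicative k c) (hss : IsSemisimpleRing hc.sliceAlgebra) (i j : n) :
    IsSemisimpleModule (DualAlgebra k C) (Submodule.span (DualAlgebra k C) {c i j}) := by
  have : IsSemisimpleRing hc.dualAlgHom.range := hss
  refine isSemisimpleModule_span_singleton_of_ker_le (φ := hc.dualAlgHom.rangeRestrict.toRingHom)
    hc.dualAlgHom.rangeRestrict_surjective _ fun f hf ↦ ?_
  have hzero (l : n) : f.ofConv (c l j) = 0 :=
    congrFun (congrFun (congrArg Subtype.val hf) l) j
  rw [isComod_comul.smul_def, hc.comul, map_sum]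
  simp [hzero]

theorem isCosemisimple_of_forall_isSemisimpleRing_sliceAlgebra {G H : Type u} [Ring G]
    [Bialgebra k G] [Ring H] [Bialgebra k H] {π : G →ₐc[k] H} (hπ : Function.Surjective π)
    (h : ∀ (n : ℕ) (c : Matrix (Fin n) (Fin n) G) (hc : IsMultiplicative k c),
      IsSemisimpleRing (hc.map π).sliceAlgebra) :
    IsCosemisimple k H := by
  rw [isCosemisimple_iff]
  let s : Set H := {x | ∃ (n : ℕ) (c : Matrix (Fin n) (Fin n) G), IsMultiplicative k c ∧
    ∃ i j, c.map π i j = x}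
  refine isSemisimpleModule_of_span_singleton (s := s) ?_ ?_
  · have := isComod_comul (k := k) (C := H).isScalarTower
    refine eq_top_iff.mpr fun x _ ↦ Submodule.span_le_restrictScalars k _ _ ?_
    obtain ⟨x, rfl⟩ := hπ x
    obtain ⟨n, c, hc, hx⟩ := exists_isMultiplicative_mem_span (k := k) x
    refine Submodule.span_mono ?_ (Submodule.apply_mem_span_image_of_mem_span (π : G →ₗ[k] H) hx)
    rintro _ ⟨_, ⟨p, rfl⟩, rfl⟩
    exact ⟨n, c, hc, p.1, p.2, rfl⟩
  · rintro _ ⟨n, c, hc, i, j, rfl⟩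
    exact (hc.map π).isSemisimpleModule_span_singleton (h n c hc) i j

end Cosemisimple

end QG

open QG HopfAlgebra in
/-- A left- or right-normal quantum subgroup of an involutory
(`S² = id`) linearly reductive quantum group is linearly reductive and normal. -/
theorem statement_1 (k : Type u) [Field k] [IsAlgClosed k]
    (G H : Type u) [Ring G] [HopfAlgebra k G] [Ring H] [HopfAlgebra k H]
    (π : G →ₐc[k] H) (hsurj : Function.Surjective π)
    (hcss : IsCosemisimple k G)
    (hinv : ∀ x : G, antipode (R := k) (A := G) (antipode (R := k) (A := G) x) = x)
    (hnorm : IsLeftNormal k G (π : G →ₗ[k] H) ∨ IsRightNormal k G (π : G →ₗ[k] H)) :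
    IsCosemisimple k H ∧
      IsLeftNormal k G (π : G →ₗ[k] H) ∧ IsRightNormal k G (π : G →ₗ[k] H) := by
  have hinvH (x : H) : antipode k (antipode k x) = x := by
    obtain ⟨x, rfl⟩ := hsurj x
    rw [← map_antipode, ← map_antipode, hinv]
  obtain ⟨hl, hr⟩ : IsLeftNormal k G (π : G →ₗ[k] H) ∧ IsRightNormal k G (π : G →ₗ[k] H) :=
    hnorm.elim (fun h ↦ ⟨h, isRightNormal_of_isLeftNormal hinv h⟩)
      fun h ↦ ⟨isLeftNormal_of_isRightNormal hinv h, h⟩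
  refine ⟨isCosemisimple_of_forall_isSemisimpleRing_sliceAlgebra hsurj fun n c hc ↦ ?_, hl, hr⟩
  exact isSemisimpleRing_sliceAlgebra hcss hc hinv hinvH hl hr
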